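/- In the constrained minimax setting, let x̄ be feasible for (w̄,v̄) (i.e., Υ(x̄,w̄) ∈ Z), set z̄₁ := Ξ(x̄,w̄), z̄₂ := Υ(x̄,w̄), z̄ := (z̄₁,z̄₂), and let v̄ ∈ ∂θ(z̄) for the CPWL function θ associated with the minimax problem. Then the nondegeneracy condition ∂²θ(z̄,v̄)(0) ∩ ker ∇_xΦ(x̄,w̄)* = {0} (equivalently S(z̄) ∩ ker ∇_xΦ(x̄,w̄)* = {0}) holds if and only if 𝒟 ∩ ker(∇_xΞ(x̄,w̄)*, ∇_xΥ(x̄,w̄)*) = {0}, i.e., the only pair (y₁,y₂) with y₁ ∈ span{e_i − e_j : i,j ∈ 𝒦(z̄₁)}, y₂ ∈ span{c_t : t ∈ ℐ(z̄₂)}, and ∇_xΞ(x̄,w̄)*y₁ + ∇_xΥ(x̄,w̄)*y₂ = 0 is (y₁,y₂) = (0,0). -/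

import Mathlib

noncomputable section
open Set Filter Topology Metric
open scoped RealInnerProductSpace Pointwise NNReal Classical

/-- `Euc m` is the Euclidean space `ℝ^m`. -/
abbrev Euc (m : ℕ) := EuclideanSpace ℝ (Fin m)

variable {F G : Type*} [NormedAddCommGroup F] [InnerProductSpace ℝ F]
  [NormedAddCommGroup G] [InnerProductSpace ℝ G]

/-- The (convex) subdifferential of an extended-real-valued function:
`∂θ(z) = {v : θ(z') ≥ θ(z) + ⟨v, z' - z⟩ for all z'}`. -/
def subdiff (θ : F → EReal) (z : F) : Set F :=
  {v | ∀ z', θ z + ((⟪v, z' - z⟫ : ℝ) : EReal) ≤ θ z'}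

/-- The Fréchet (regular) normal cone to `Ω` at `x`:
vectors `v` with `limsup_{y → x, y ∈ Ω} ⟨v, y - x⟩ / ‖y - x‖ ≤ 0`. -/
def frechetNormal (Ω : Set F) (x : F) : Set F :=
  {v | Filter.limsup (fun y => ⟪v, y - x⟫ / ‖y - x‖) (𝓝[Ω] x) ≤ 0}

/-- The limiting (Mordukhovich) normal cone to `Ω` at `x`. -/
def limitingNormal (Ω : Set F) (x : F) : Set F :=
  {v | ∃ xs vs : ℕ → F, (∀ k, xs k ∈ Ω) ∧ Filter.Tendsto xs Filter.atTop (𝓝 x) ∧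
    Filter.Tendsto vs Filter.atTop (𝓝 v) ∧ ∀ k, vs k ∈ frechetNormal Ω (xs k)}

/-- Pairing into the `ℓ²`-product of two inner product spaces. -/
def pl2 (x : F) (y : G) : WithLp 2 (F × G) := (WithLp.equiv 2 (F × G)).symm (x, y)

/-- The second-order subdifferential (generalized Hessian)
`∂²θ(z,v)(u) = {w : (w,-u) ∈ N((z,v); gph ∂θ)}`. -/
def sosd (θ : F → EReal) (z v : F) (u : F) : Set F :=
  {w | pl2 w (-u) ∈ limitingNormal
    {q : WithLp 2 (F × F) | ((WithLp.equiv 2 (F × F)) q).2 ∈ subdiff θ ((WithLp.equiv 2 (F × F)) q).1}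
    (pl2 z v)}

/-- The polyhedral domain `{z : ⟨d i, z⟩ ≤ β i for all i}` of a CPWL function. -/
def cpwlDom {m p : ℕ} (d : Fin p → Euc m) (β : Fin p → ℝ) : Set (Euc m) :=
  {z | ∀ i, ⟪d i, z⟫ ≤ β i}

/-- The CPWL function determined by the data `(a, α, d, β)`:
`θ(z) = max_i (⟨a i, z⟩ - α i)` on its polyhedral domain and `+∞` outside. -/
def cpwlFun {m l p : ℕ} (a : Fin l → Euc m) (α : Fin l → ℝ) (d : Fin p → Euc m)
    (β : Fin p → ℝ) : Euc m → EReal :=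
  fun z => if z ∈ cpwlDom d β then (((⨆ i, (⟪a i, z⟫ - α i)) : ℝ) : EReal) else ⊤

/-- Active indices of the max expression at `z`. -/
def Kact {m l p : ℕ} (a : Fin l → Euc m) (α : Fin l → ℝ) (d : Fin p → Euc m) (β : Fin p → ℝ)
    (z : Euc m) : Set (Fin l) :=
  {i | cpwlFun a α d β z = ((⟪a i, z⟫ - α i : ℝ) : EReal)}

/-- Active indices of the domain inequalities at `z`. -/
def Iact {m p : ℕ} (d : Fin p → Euc m) (β : Fin p → ℝ) (z : Euc m) : Set (Fin p) :=
  {i | ⟪d i, z⟫ = β i}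

/-- Convex conic hull: all finite nonnegative combinations of elements of `s`. -/
def coneHull (s : Set F) : Set F :=
  {x | ∃ (n : ℕ) (c : Fin n → ℝ) (y : Fin n → F), (∀ i, 0 ≤ c i) ∧ (∀ i, y i ∈ s) ∧
    x = ∑ i, c i • y i}

/-- `Spar θ z` is the linear subspace parallel to the affine hull of `∂θ(z)`. -/
def Spar (θ : F → EReal) (z : F) : Submodule ℝ F := (affineSpan ℝ (subdiff θ z)).direction

/-- A convex polyhedron: a finite intersection of closed halfspaces. -/
def IsPolyhedron {V : Type*} [AddCommGroup V] [Module ℝ V] (C : Set V) : Prop :=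
  ∃ (N : ℕ) (f : Fin N → V →ₗ[ℝ] ℝ) (b : Fin N → ℝ), C = {x | ∀ i, f i x ≤ b i}

/-- A proper convex piecewise linear function with values in `ℝ ∪ {+∞}`:
its epigraph is a convex polyhedron, it never takes the value `-∞`, and it is
not identically `+∞`. -/
def IsCPWL {V : Type*} [AddCommGroup V] [Module ℝ V] (f : V → EReal) : Prop :=
  IsPolyhedron {xt : V × ℝ | f xt.1 ≤ (xt.2 : EReal)} ∧ (∀ x, f x ≠ ⊥) ∧ (∃ x, f x ≠ ⊤)

/-- Local argmin set `M_γ(w,v)` of `x ↦ φ(x,w) - ⟨v,x⟩` over the ball `‖x - xb‖ ≤ γ`,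
with the convention that minimizers at which the objective is `+∞` are discarded. -/
def argminLoc {n d : ℕ} (φ : Euc n → Euc d → EReal) (xb : Euc n) (γ : ℝ) (w : Euc d)
    (v : Euc n) : Set (Euc n) :=
  {x | ‖x - xb‖ ≤ γ ∧ φ x w ≠ ⊤ ∧
    ∀ y, ‖y - xb‖ ≤ γ → φ x w - ((⟪v, x⟫ : ℝ) : EReal) ≤ φ y w - ((⟪v, y⟫ : ℝ) : EReal)}

/-- Local optimal value `m_γ(w,v)` of `x ↦ φ(x,w) - ⟨v,x⟩` over the ball `‖x - xb‖ ≤ γ`. -/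
def infLoc {n d : ℕ} (φ : Euc n → Euc d → EReal) (xb : Euc n) (γ : ℝ) (w : Euc d)
    (v : Euc n) : EReal :=
  ⨅ x ∈ {x : Euc n | ‖x - xb‖ ≤ γ}, (φ x w - ((⟪v, x⟫ : ℝ) : EReal))

/-- `xb` is a fully stable locally optimal solution of
`minimize φ(x,wb) - ⟨vb,x⟩` : for some `γ > 0` and neighborhoods `W × V` of `(wb,vb)`,
the local argmin map is single-valued and Lipschitz with value `xb` at `(wb,vb)`, and the
local optimal value function is finite and Lipschitz. -/
def FullyStableSol {n d : ℕ} (φ : Euc n → Euc d → EReal) (xb : Euc n) (wb : Euc d)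
    (vb : Euc n) : Prop :=
  ∃ γ > (0 : ℝ), ∃ W ∈ 𝓝 wb, ∃ V ∈ 𝓝 vb,
    (∃ σ : Euc d × Euc n → Euc n,
      (∃ K : ℝ≥0, LipschitzOnWith K σ (W ×ˢ V)) ∧
      (∀ w ∈ W, ∀ v ∈ V, argminLoc φ xb γ w v = {σ (w, v)}) ∧ σ (wb, vb) = xb) ∧
    (∃ μ : Euc d × Euc n → ℝ,
      (∃ K : ℝ≥0, LipschitzOnWith K μ (W ×ˢ V)) ∧
      ∀ w ∈ W, ∀ v ∈ V, infLoc φ xb γ w v = ((μ (w, v) : ℝ) : EReal))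

/-- The partial limiting subdifferential `∂ₓψ(x,w)` defined through the limiting normal
cone to the epigraph of `ψ(·,w)`. -/
def partialSubdiffX {n d : ℕ} (ψ : Euc n → Euc d → EReal) (x : Euc n) (w : Euc d) :
    Set (Euc n) :=
  {v | ∃ r : ℝ, ψ x w = (r : EReal) ∧
    pl2 v (-1 : ℝ) ∈ limitingNormal
      {q : WithLp 2 (Euc n × ℝ) |
        ψ ((WithLp.equiv 2 (Euc n × ℝ)) q).1 w ≤ ((((WithLp.equiv 2 (Euc n × ℝ)) q).2 : ℝ) : EReal)}
      (pl2 x r)}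

/-- The coderivative `D*∂ₓψ(xb,wb,qb)(u)` of the partial subdifferential mapping,
via the limiting normal cone to its graph in `ℝ^n × ℝ^d × ℝ^n`. -/
def coderivPartialSubdiffX {n d : ℕ} (ψ : Euc n → Euc d → EReal) (xb : Euc n) (wb : Euc d)
    (qb : Euc n) (u : Euc n) : Set (Euc n × Euc d) :=
  {P | pl2 (pl2 P.1 P.2) (-u) ∈ limitingNormal
    {t : WithLp 2 (WithLp 2 (Euc n × Euc d) × Euc n) |
      ((WithLp.equiv 2 (WithLp 2 (Euc n × Euc d) × Euc n)) t).2 ∈ partialSubdiffX ψ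
        ((WithLp.equiv 2 (Euc n × Euc d)) (((WithLp.equiv 2 (WithLp 2 (Euc n × Euc d) × Euc n)) t).1)).1
        ((WithLp.equiv 2 (Euc n × Euc d)) (((WithLp.equiv 2 (WithLp 2 (Euc n × Euc d) × Euc n)) t).1)).2}
    (pl2 (pl2 xb wb) qb)}

/-- Partial Hessian in `x` : the derivative in `x` of the partial gradient in `x`. -/
def hessXX {n d : ℕ} (g : Euc n → Euc d → ℝ) (xb : Euc n) (wb : Euc d) : Euc n →L[ℝ] Euc n :=
  fderiv ℝ (fun x => gradient (fun x' => g x' wb) x) xb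

/-- Mixed partial Hessian: derivative in `w` of the partial gradient in `x`. -/
def hessWX {n d : ℕ} (g : Euc n → Euc d → ℝ) (xb : Euc n) (wb : Euc d) : Euc d →L[ℝ] Euc n :=
  fderiv ℝ (fun w => gradient (fun x' => g x' w) xb) wb

/-- The inner mapping `Ξ(x,w) = (φ_1(x,w),…,φ_l(x,w))` of the minimax problem. -/
def mmXi {n d l : ℕ} (φs : Fin l → Euc n × Euc d → ℝ) (q : Euc n × Euc d) : Euc l :=
  (EuclideanSpace.equiv (Fin l) ℝ).symm (fun i => φs i q)

/-- The constraint mapping `Υ(x,w) = (ζ_1(x,w),…,ζ_r(x,w))` of the minimax problem. -/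
def mmUps {n d r : ℕ} (ζs : Fin r → Euc n × Euc d → ℝ) (q : Euc n × Euc d) : Euc r :=
  (EuclideanSpace.equiv (Fin r) ℝ).symm (fun j => ζs j q)

/-- The full inner mapping `Φ = (Ξ,Υ) : ℝ^n × ℝ^d → ℝ^{l+r}` of the minimax problem. -/
def mmPhi {n d l r : ℕ} (φs : Fin l → Euc n × Euc d → ℝ) (ζs : Fin r → Euc n × Euc d → ℝ)
    (q : Euc n × Euc d) : EuclideanSpace ℝ (Fin l ⊕ Fin r) :=
  (EuclideanSpace.equiv (Fin l ⊕ Fin r) ℝ).symm (Sum.elim (fun i => φs i q) (fun j => ζs j q))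

/-- The CPWL outer function of the constrained minimax problem:
`θ(z₁,z₂) = max_i (z₁)_i` if `⟨c_t, z₂⟩ ≤ τ_t` for all `t`, and `+∞` otherwise. -/
def mmTheta (l : ℕ) {r p : ℕ} (c : Fin p → Euc r) (τ : Fin p → ℝ) :
    EuclideanSpace ℝ (Fin l ⊕ Fin r) → EReal :=
  fun z => if ∀ t, (∑ j, c t j * z (Sum.inr j)) ≤ τ t
    then (((⨆ i : Fin l, z (Sum.inl i)) : ℝ) : EReal) else ⊤


lemma mem_subdiff_aux {θ : F → EReal} {P : Set F} {M : F → ℝ}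
    (hθ : ∀ z, θ z = if z ∈ P then (M z : EReal) else ⊤) {z0 : F} (hz0 : z0 ∈ P) (z v : F) :
    v ∈ subdiff θ z ↔ z ∈ P ∧ ∀ z' ∈ P, M z + ⟪v, z' - z⟫ ≤ M z' := by
  constructor
  · intro h
    have hz : z ∈ P := by
      by_contra hz
      have h1 := h z0
      rw [hθ z, hθ z0, if_neg hz, if_pos hz0, EReal.top_add_coe] at h1
      exact absurd (top_le_iff.1 h1) (EReal.coe_ne_top _)
    refine ⟨hz, fun z' hz' => ?_⟩
    have h1 := h z'
    rw [hθ z, hθ z', if_pos hz, if_pos hz'] at h1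
    exact_mod_cast h1
  · rintro ⟨hz, h⟩ z'
    rw [hθ z, hθ z', if_pos hz]
    split_ifs with hz'
    · exact_mod_cast h z' hz'
    · exact le_top

lemma frechet_le {Ω : Set F} {x v : F} (hv : v ∈ frechetNormal Ω x) {ε : ℝ} (hε : 0 < ε) :
    ∀ᶠ y in 𝓝[Ω] x, ⟪v, y - x⟫ ≤ ε * ‖y - x‖ := by
  have hv' : Filter.limsup (fun y => ⟪v, y - x⟫ / ‖y - x‖) (𝓝[Ω] x) < ε := lt_of_le_of_lt hv hε
  have hb : Filter.IsBoundedUnder (· ≤ ·) (𝓝[Ω] x) (fun y => ⟪v, y - x⟫ / ‖y - x‖) := by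
    refine Filter.isBoundedUnder_of ⟨‖v‖, fun y => ?_⟩
    exact div_le_of_le_mul₀ (norm_nonneg (y - x)) (norm_nonneg v) (real_inner_le_norm v (y - x))
  filter_upwards [Filter.eventually_lt_of_limsup_lt hv' hb] with y hy
  rcases eq_or_ne (y - x) 0 with h0 | h0
  · simp [h0]
  · exact ((div_lt_iff₀ (norm_pos_iff.2 h0)).1 hy).le

lemma frechet_of_eq {Ω : Set F} {x v : F} (hx : x ∈ Ω)
    (h : ∀ᶠ y in 𝓝[Ω] x, ⟪v, y - x⟫ = 0) : v ∈ frechetNormal Ω x := by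
  have : (𝓝[Ω] x).NeBot := mem_closure_iff_nhdsWithin_neBot.1 (subset_closure hx)
  change Filter.limsup (fun y => ⟪v, y - x⟫ / ‖y - x‖) (𝓝[Ω] x) ≤ 0
  have h2 : (fun y => ⟪v, y - x⟫ / ‖y - x‖) =ᶠ[𝓝[Ω] x] fun _ => (0:ℝ) := by
    filter_upwards [h] with y hy
    simp [hy]
  rw [Filter.limsup_congr h2, Filter.limsup_const]

lemma slope_aux {θ : F → EReal} {P : Set F} {M : F → ℝ}
    (hθ : ∀ z, θ z = if z ∈ P then (M z : EReal) else ⊤) {z v h : F} {κ : ℝ}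
    (hv : v ∈ subdiff θ z) (hz : z ∈ P)
    (H : ∀ᶠ t : ℝ in 𝓝 0, z + t • h ∈ P ∧ M (z + t • h) = M z + t * κ) : ⟪v, h⟫ = κ := by
  obtain ⟨ε, hε, H⟩ := Metric.eventually_nhds_iff.1 H
  have h1 := (mem_subdiff_aux hθ hz z v).1 hv
  have key : ∀ t : ℝ, |t| < ε → t * ⟪v, h⟫ ≤ t * κ := by
    intro t ht
    obtain ⟨h2, h3⟩ := @H t (by simpa [Real.dist_eq] using ht)
    have h4 := h1.2 _ h2
    rw [h3, add_sub_cancel_left, inner_smul_right] at h4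
    linarith
  have k1 := key (ε/2) (by rw [abs_of_pos] <;> linarith)
  have k2 := key (-(ε/2)) (by rw [abs_neg, abs_of_pos] <;> linarith)
  have k3 : (ε/2) * ⟪v, h⟫ = (ε/2) * κ := by linarith
  exact mul_left_cancel₀ (by positivity) k3

theorem abstract_sosd [FiniteDimensional ℝ F] {θ : F → EReal} {P : Set F} {M : F → ℝ}
    (hθ : ∀ z, θ z = if z ∈ P then (M z : EReal) else ⊤) {zb vb : F} (hzb : zb ∈ P)
    (hvb : vb ∈ subdiff θ zb) (S : Submodule ℝ F)
    (H1 : ∀ᶠ z in 𝓝 zb, z ∈ P → ∃ ε : ℝ, 0 < ε ∧ z + ε • (z - zb) ∈ P ∧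
      M (z + ε • (z - zb)) ≤ M z + ε * (M z - M zb))
    (H2 : ∀ h ∈ Sᗮ, ∃ κ : ℝ, ∀ᶠ z in 𝓝 zb, z ∈ P → ∀ᶠ t : ℝ in 𝓝 0, z + t • h ∈ P ∧
      M (z + t • h) = M z + t * κ)
    (H3 : S ≤ Spar θ zb) : Spar θ zb = S ∧ sosd θ zb vb 0 = S := by
  have hmem := mem_subdiff_aux hθ hzb
  have hS : Spar θ zb = S := by
    apply le_antisymm _ H3
    unfold Spar
    rw [direction_affineSpan, vectorSpan_def, Submodule.span_le]
    rintro _ ⟨v, hv, v', hv', rfl⟩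
    rw [← Submodule.orthogonal_orthogonal S]
    rw [SetLike.mem_coe, Submodule.mem_orthogonal]
    intro h hh
    obtain ⟨κ, H⟩ := H2 h hh
    have H := H.self_of_nhds hzb
    change ⟪h, v - v'⟫ = 0
    rw [inner_sub_right, real_inner_comm, slope_aux hθ hv hzb H,
      real_inner_comm, slope_aux hθ hv' hzb H, sub_self]
  refine ⟨hS, ?_⟩
  set Ω : Set (WithLp 2 (F × F)) := {q : WithLp 2 (F × F) | ((WithLp.equiv 2 (F × F)) q).2 ∈ subdiff θ ((WithLp.equiv 2 (F × F)) q).1} with hΩ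
  have memΩ : ∀ q, q ∈ Ω ↔ q.snd ∈ subdiff θ q.fst := fun q => Iff.rfl
  have cfst : Continuous (fun q : WithLp 2 (F × F) => q.fst) := by fun_prop
  have csnd : Continuous (fun q : WithLp 2 (F × F) => q.snd) := by fun_prop
  apply Set.Subset.antisymm
  · rintro w ⟨xs, vs, hxs, hx, hv, hfn⟩
    rw [← Submodule.orthogonal_orthogonal S]
    rw [SetLike.mem_coe, Submodule.mem_orthogonal]
    have one : ∀ h ∈ Sᗮ, ⟪h, w⟫ ≤ 0 := by
      intro h hh
      obtain ⟨κ, H⟩ := H2 h hh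
      have t1 : Tendsto (fun k => (xs k).fst) atTop (𝓝 zb) := (cfst.tendsto _).comp hx
      have t2 : Tendsto (fun k => ⟪h, (vs k).fst⟫) atTop (𝓝 ⟪h, w⟫) :=
        (((continuous_const.inner continuous_id).tendsto w).comp ((cfst.tendsto _).comp hv))
      refine le_of_tendsto t2 ?_
      filter_upwards [t1.eventually H] with k hk
      have hg := (memΩ _).1 (hxs k)
      have hP := ((hmem _ _).1 hg).1
      have hk := hk hP
      have hsl := slope_aux hθ hg hP hk
      let γ : ℝ → WithLp 2 (F × F) := fun t => xs k + t • pl2 h (0:F)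
      have hγfst : ∀ t, (γ t).fst = (xs k).fst + t • h := fun t => rfl
      have hγsnd : ∀ t, (γ t).snd = (xs k).snd := fun t => by
        change (xs k).snd + t • (0:F) = _
        simp
      have hγ : ∀ᶠ t in 𝓝 (0:ℝ), γ t ∈ Ω := by
        filter_upwards [hk] with t ht
        rw [memΩ, hγfst, hγsnd, hmem]
        refine ⟨ht.1, fun z' hz' => ?_⟩
        have := ((hmem _ _).1 hg).2 z' hz'
        rw [ht.2, ← sub_sub, inner_sub_right, inner_smul_right, hsl]
        linarith
      have hc : Tendsto γ (𝓝 0) (𝓝[Ω] (xs k)) := by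
        refine tendsto_nhdsWithin_iff.2 ⟨?_, hγ⟩
        have : Continuous γ := by fun_prop
        simpa [γ] using this.tendsto 0
      have hin : ∀ t, ⟪vs k, γ t - xs k⟫ = t * ⟪h, (vs k).fst⟫ := by
        intro t
        simp only [γ, add_sub_cancel_left, inner_smul_right, WithLp.prod_inner_apply]
        congr 1
        change ⟪(vs k).fst, h⟫ + ⟪(vs k).snd, (0:F)⟫ = _
        rw [inner_zero_right, add_zero, real_inner_comm]
      set N := ‖pl2 h (0:F)‖ with hN
      have hno : ∀ t, ‖γ t - xs k‖ = |t| * N := by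
        intro t
        simp only [γ, add_sub_cancel_left, norm_smul, Real.norm_eq_abs, hN]
      have key : ∀ ε > 0, ⟪h, (vs k).fst⟫ ≤ ε * N := by
        intro ε hε
        obtain ⟨δ, hδ, hh⟩ := Metric.eventually_nhds_iff.1 (hc.eventually (frechet_le (hfn k) hε))
        have := @hh (δ/2) (by rw [Real.dist_eq, sub_zero, abs_of_pos] <;> linarith)
        rw [hin, hno, abs_of_pos (by positivity)] at this
        have h3 : δ/2 * ⟪h, (vs k).fst⟫ ≤ δ/2 * (ε * N) := by linarith
        exact le_of_mul_le_mul_left h3 (by positivity)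
      have hN0 : 0 ≤ N := norm_nonneg _
      by_contra hcon
      push Not at hcon
      have := key (⟪h, (vs k).fst⟫ / (2 * (N + 1))) (by positivity)
      rw [div_mul_eq_mul_div, le_div_iff₀ (by positivity)] at this
      nlinarith
    intro h hh
    apply le_antisymm (one h hh)
    have := one (-h) (Submodule.neg_mem _ hh)
    rw [inner_neg_left] at this
    linarith
  · intro w hw
    set C := subdiff θ zb with hC
    have hCc : Convex ℝ C := by
      intro v hv v' hv' a b ha hb hab
      rw [hC, hmem] at hv hv' ⊢
      refine ⟨hzb, fun z' hz' => ?_⟩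
      have e1 := hv.2 z' hz'
      have e2 := hv'.2 z' hz'
      rw [inner_add_left, inner_smul_left, inner_smul_left]
      simp only [conj_trivial]
      have hb' : b = 1 - a := by linarith
      subst hb'
      nlinarith
    obtain ⟨v0, hv0⟩ := Set.Nonempty.intrinsicInterior hCc ⟨vb, hvb⟩
    have hv0C : v0 ∈ C := intrinsicInterior_subset hv0
    obtain ⟨y, hy, hyv⟩ := mem_intrinsicInterior.1 hv0
    obtain ⟨ε, hε, hball⟩ := Metric.mem_nhds_iff.1 (mem_interior_iff_mem_nhds.1 hy)
    have hball' : ∀ v ∈ affineSpan ℝ C, dist v v0 < ε → v ∈ C := by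
      intro v hv hd
      have : (⟨v, hv⟩ : affineSpan ℝ C) ∈ Metric.ball y ε := by
        rw [Metric.mem_ball, Subtype.dist_eq, hyv]
        exact hd
      exact hball this
    have hvbA : vb ∈ affineSpan ℝ C := subset_affineSpan ℝ C hvb
    let a : ℕ → ℝ := fun k => 1 / ((k:ℝ) + 1)
    have ha0 : ∀ k, 0 < a k := fun k => by positivity
    have ha1 : ∀ k, a k ≤ 1 := fun k => by
      simp only [a]
      rw [div_le_one (by positivity)]
      have : (0:ℝ) ≤ k := Nat.cast_nonneg k
      linarith
    let vk : ℕ → F := fun k => vb + a k • (v0 - vb)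
    have hlin : ∀ v ∈ C, ∀ k, vb + a k • (v - vb) ∈ C := by
      intro v hv k
      have := hCc hvb hv (by linarith [ha1 k] : 0 ≤ 1 - a k) (ha0 k).le (by ring)
      convert this using 1
      module
    have hvkC : ∀ k, vk k ∈ C := fun k => hlin v0 hv0C k
    have hvkball : ∀ k, ∀ v ∈ affineSpan ℝ C, dist v (vk k) < a k * ε → v ∈ C := by
      intro k v hv hd
      have hak := ha0 k
      have e : v = vb + a k • ((vb + (a k)⁻¹ • (v - vb)) - vb) := by
        rw [add_sub_cancel_left, smul_smul, mul_inv_cancel₀ hak.ne', one_smul, add_sub_cancel]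
      rw [e]
      apply hlin
      apply hball'
      · have := AffineSubspace.smul_vsub_vadd_mem (affineSpan ℝ C) ((a k)⁻¹) hv hvbA hvbA
        rwa [vsub_eq_sub, vadd_eq_add, add_comm] at this
      · have e2 : vb + (a k)⁻¹ • (v - vb) - v0 = (a k)⁻¹ • (v - vk k) := by
          simp only [vk]
          have : v0 = vb + (a k)⁻¹ • (a k • (v0 - vb)) := by
            rw [smul_smul, inv_mul_cancel₀ hak.ne', one_smul, add_sub_cancel]
          nth_rewrite 1 [this]
          module
        rw [dist_eq_norm, e2, norm_smul, ← dist_eq_norm, Real.norm_eq_abs,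
          abs_of_pos (inv_pos.2 hak), inv_mul_lt_iff₀ hak]
        exact hd
    have hak : Tendsto a atTop (𝓝 0) := tendsto_one_div_add_atTop_nhds_zero_nat
    have hvkt : Tendsto vk atTop (𝓝 vb) := by
      have : Tendsto vk atTop (𝓝 (vb + (0:ℝ) • (v0 - vb))) :=
        tendsto_const_nhds.add (hak.smul_const _)
      simpa using this
    have cpl : Continuous (fun v : F => pl2 zb v) := by
      change Continuous (fun v : F => WithLp.toLp 2 (zb, v))
      fun_prop
    refine ⟨fun k => pl2 zb (vk k), fun _ => pl2 w (-0), fun k => hvkC k,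
      (cpl.tendsto _).comp hvkt, tendsto_const_nhds, fun k => ?_⟩
    have hkΩ : pl2 zb (vk k) ∈ Ω := hvkC k
    apply frechet_of_eq hkΩ
    have e1 : ∀ᶠ q in 𝓝 (pl2 zb (vk k)), q.fst ∈ P → ∃ ε : ℝ, 0 < ε ∧ q.fst + ε • (q.fst - zb) ∈ P ∧
      M (q.fst + ε • (q.fst - zb)) ≤ M q.fst + ε * (M q.fst - M zb) :=
      (cfst.tendsto (pl2 zb (vk k))).eventually H1
    have e2 : ∀ᶠ q in 𝓝 (pl2 zb (vk k)), q.snd ∈ Metric.ball (vk k) (a k * ε) :=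
      (csnd.tendsto (pl2 zb (vk k))).eventually
        (Metric.ball_mem_nhds _ (mul_pos (ha0 k) hε))
    filter_upwards [self_mem_nhdsWithin, mem_nhdsWithin_of_mem_nhds e1,
      mem_nhdsWithin_of_mem_nhds e2] with q hq hq1 hq2
    have hq' := (hmem _ _).1 ((memΩ q).1 hq)
    obtain ⟨s, hs, hsP, hsM⟩ := hq1 hq'.1
    set z := q.fst
    set v := q.snd
    have i1 := hq'.2 _ hsP
    rw [add_sub_cancel_left, inner_smul_right] at i1
    have i1' : ⟪v, z - zb⟫ ≤ M z - M zb := by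
      have : s * ⟪v, z - zb⟫ ≤ s * (M z - M zb) := by linarith
      exact le_of_mul_le_mul_left this hs
    have i2 := hq'.2 _ hzb
    rw [← neg_sub z zb, inner_neg_right] at i2
    have hvC : v ∈ C := by
      rw [hC, hmem]
      refine ⟨hzb, fun z' hz' => ?_⟩
      have := hq'.2 z' hz'
      rw [show z' - z = (z' - zb) - (z - zb) by abel, inner_sub_right] at this
      linarith
    have hmax : ∀ u ∈ C, ⟪u, z - zb⟫ ≤ ⟪v, z - zb⟫ := by
      intro u hu
      have := ((hmem _ _).1 hu).2 z hq'.1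
      linarith
    have hvA : v ∈ affineSpan ℝ C := subset_affineSpan ℝ C hvC
    have hev : ∀ᶠ t : ℝ in 𝓝 0, v + t • w ∈ C := by
      have hc : Continuous (fun t : ℝ => v + t • w) := by fun_prop
      have : ∀ᶠ t : ℝ in 𝓝 0, v + t • w ∈ Metric.ball (vk k) (a k * ε) := by
        apply hc.tendsto 0
        simp only [zero_smul, add_zero]
        exact Metric.isOpen_ball.mem_nhds hq2
      filter_upwards [this] with t ht
      refine hvkball k _ ?_ ht
      have hwS : t • w ∈ (affineSpan ℝ C).direction := by
        apply Submodule.smul_mem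
        have : w ∈ Spar θ zb := H3 hw
        exact this
      have := AffineSubspace.vadd_mem_of_mem_direction hwS hvA
      rwa [vadd_eq_add, add_comm] at this
    obtain ⟨δ, hδ, hev⟩ := Metric.eventually_nhds_iff.1 hev
    have j1 := hmax _ (@hev (δ/2) (by rw [Real.dist_eq, sub_zero, abs_of_pos] <;> linarith))
    have j2 := hmax _ (@hev (-(δ/2)) (by rw [Real.dist_eq, sub_zero, abs_neg, abs_of_pos] <;> linarith))
    rw [inner_add_left, inner_smul_left] at j1 j2
    simp only [conj_trivial] at j1 j2
    have j3 : δ/2 * ⟪w, z - zb⟫ = δ/2 * 0 := by linarith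
    have j4 := mul_left_cancel₀ (by positivity) j3
    rw [WithLp.prod_inner_apply]
    change ⟪w, z - zb⟫ + ⟪(-0:F), v - vk k⟫ = 0
    rw [j4, neg_zero, inner_zero_left, add_zero]

/-- linear form of the constraint -/
def mmG {r p : ℕ} (l : ℕ) (c : Fin p → Euc r) (t : Fin p)
    (z : EuclideanSpace ℝ (Fin l ⊕ Fin r)) : ℝ := ∑ j, c t j * z (Sum.inr j)

def mmM {l r : ℕ} (z : EuclideanSpace ℝ (Fin l ⊕ Fin r)) : ℝ := ⨆ i : Fin l, z (Sum.inl i)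

def mmPs {r p : ℕ} (l : ℕ) (c : Fin p → Euc r) (τ : Fin p → ℝ) :
    Set (EuclideanSpace ℝ (Fin l ⊕ Fin r)) := {z | ∀ t, mmG l c t z ≤ τ t}

lemma mmG_add {l r p : ℕ} (c : Fin p → Euc r) (t : Fin p)
    (z h : EuclideanSpace ℝ (Fin l ⊕ Fin r)) (s : ℝ) :
    mmG l c t (z + s • h) = mmG l c t z + s * mmG l c t h := by
  simp only [mmG, PiLp.add_apply, PiLp.smul_apply, smul_eq_mul, Finset.mul_sum,
    ← Finset.sum_add_distrib]
  exact Finset.sum_congr rfl fun j _ => by ring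

lemma mmG_cont {l r p : ℕ} (c : Fin p → Euc r) (t : Fin p) : Continuous (mmG l c t) := by
  unfold mmG
  fun_prop

lemma le_mmM {l r : ℕ} (z : EuclideanSpace ℝ (Fin l ⊕ Fin r)) (i : Fin l) :
    z (Sum.inl i) ≤ mmM z := le_ciSup (Set.finite_range fun i => z (Sum.inl i)).bddAbove i

lemma mmM_le {l r : ℕ} (hl : 0 < l) (z : EuclideanSpace ℝ (Fin l ⊕ Fin r)) {b : ℝ}
    (h : ∀ i, z (Sum.inl i) ≤ b) : mmM z ≤ b := by
  have : Nonempty (Fin l) := ⟨⟨0, hl⟩⟩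
  exact ciSup_le h

lemma exists_mmM {l r : ℕ} (hl : 0 < l) (z : EuclideanSpace ℝ (Fin l ⊕ Fin r)) :
    ∃ i, z (Sum.inl i) = mmM z := by
  have : Nonempty (Fin l) := ⟨⟨0, hl⟩⟩
  exact exists_eq_ciSup_of_finite

lemma mm_near {l r p : ℕ} (hl : 0 < l) (c : Fin p → Euc r) (τ : Fin p → ℝ)
    (zb : EuclideanSpace ℝ (Fin l ⊕ Fin r)) (hzb : ∀ t, mmG l c t zb ≤ τ t) :
    ∀ᶠ z in 𝓝 zb, (∀ i : Fin l, mmM zb ≠ zb (Sum.inl i) → z (Sum.inl i) < mmM z) ∧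
      (∀ t, mmG l c t zb ≠ τ t → mmG l c t z < τ t) := by
  obtain ⟨i0, hi0⟩ := exists_mmM hl zb
  refine Filter.Eventually.and ?_ ?_
  · rw [Filter.eventually_all]
    intro i
    by_cases hi : mmM zb = zb (Sum.inl i)
    · exact Filter.Eventually.of_forall fun z hz => absurd hi hz
    · have h1 : zb (Sum.inl i) < zb (Sum.inl i0) := by
        rw [hi0]; exact lt_of_le_of_ne (le_mmM zb i) (Ne.symm hi)
      have c1 : Continuous fun z : EuclideanSpace ℝ (Fin l ⊕ Fin r) => z (Sum.inl i) := by fun_prop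
      have c2 : Continuous fun z : EuclideanSpace ℝ (Fin l ⊕ Fin r) => z (Sum.inl i0) := by fun_prop
      filter_upwards [(c1.tendsto zb).eventually_lt (c2.tendsto zb) h1] with z hz _
      exact hz.trans_le (le_mmM z i0)
  · rw [Filter.eventually_all]
    intro t
    by_cases ht : mmG l c t zb = τ t
    · exact Filter.Eventually.of_forall fun z hz => absurd ht hz
    · filter_upwards [((mmG_cont c t).tendsto zb).eventually_lt_const
        (lt_of_le_of_ne (hzb t) ht)] with z hz _
      exact hz

lemma lin_ev {a b : ℝ} (hab : a < b) (u v : ℝ) : ∀ᶠ s : ℝ in 𝓝 0, a + s * u < b + s * v := by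
  have c1 : Continuous fun s : ℝ => a + s * u := by fun_prop
  have c2 : Continuous fun s : ℝ => b + s * v := by fun_prop
  exact (c1.tendsto 0).eventually_lt (c2.tendsto 0) (by simpa using hab)

lemma mm_H1 {l r p : ℕ} (hl : 0 < l) (c : Fin p → Euc r) (τ : Fin p → ℝ)
    (zb : EuclideanSpace ℝ (Fin l ⊕ Fin r)) (hzb : ∀ t, mmG l c t zb ≤ τ t) :
    ∀ᶠ z in 𝓝 zb, z ∈ mmPs l c τ → ∃ ε : ℝ, 0 < ε ∧
      z + ε • (z - zb) ∈ mmPs l c τ ∧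
      mmM (z + ε • (z - zb)) ≤ mmM z + ε * (mmM z - mmM zb) := by
  filter_upwards [mm_near hl c τ zb hzb] with z hz hzP
  have e1 : ∀ᶠ s : ℝ in 𝓝 0, ∀ i : Fin l, mmM zb ≠ zb (Sum.inl i) →
      z (Sum.inl i) + s * (z (Sum.inl i) - zb (Sum.inl i)) < mmM z + s * (mmM z - mmM zb) := by
    rw [Filter.eventually_all]
    intro i
    by_cases hi : mmM zb = zb (Sum.inl i)
    · exact Filter.Eventually.of_forall fun z hz => absurd hi hz
    · filter_upwards [lin_ev (hz.1 i hi) (z (Sum.inl i) - zb (Sum.inl i)) (mmM z - mmM zb)]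
        with s hs _
      exact hs
  have e2 : ∀ᶠ s : ℝ in 𝓝 0, ∀ t, mmG l c t zb ≠ τ t →
      mmG l c t z + s * mmG l c t (z - zb) < τ t + s * 0 := by
    rw [Filter.eventually_all]
    intro t
    by_cases ht : mmG l c t zb = τ t
    · exact Filter.Eventually.of_forall fun z hz => absurd ht hz
    · filter_upwards [lin_ev (hz.2 t ht) (mmG l c t (z - zb)) 0] with s hs _
      exact hs
  have e3 : ∀ᶠ s : ℝ in 𝓝[>] 0, 0 < s := self_mem_nhdsWithin
  obtain ⟨s, ⟨h1, h2⟩, hs⟩ := ((mem_nhdsWithin_of_mem_nhds (e1.and e2) : _ ∈ 𝓝[>] (0:ℝ)) |>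
    Filter.Eventually.and <| e3).exists
  refine ⟨s, hs, fun t => ?_, mmM_le hl _ fun i => ?_⟩
  · rw [mmG_add]
    by_cases ht : mmG l c t zb = τ t
    · have : mmG l c t (z - zb) = mmG l c t z - mmG l c t zb := by
        have := mmG_add c t z zb (-1)
        rw [neg_one_smul, ← sub_eq_add_neg] at this
        linarith
      rw [this, ht]
      have := hzP t
      nlinarith
    · have := h2 t ht
      linarith
  · simp only [PiLp.add_apply, PiLp.smul_apply, PiLp.sub_apply, smul_eq_mul]
    by_cases hi : mmM zb = zb (Sum.inl i)
    · rw [hi]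
      have := le_mmM z i
      nlinarith
    · exact (h1 i hi).le

lemma mm_H2 {l r p : ℕ} (hl : 0 < l) (c : Fin p → Euc r) (τ : Fin p → ℝ)
    (zb : EuclideanSpace ℝ (Fin l ⊕ Fin r)) (hzb : ∀ t, mmG l c t zb ≤ τ t)
    (h : EuclideanSpace ℝ (Fin l ⊕ Fin r)) (κ : ℝ)
    (hK : ∀ i : Fin l, mmM zb = zb (Sum.inl i) → h (Sum.inl i) = κ)
    (hI : ∀ t, mmG l c t zb = τ t → mmG l c t h = 0) :
    ∀ᶠ z in 𝓝 zb, z ∈ mmPs l c τ → ∀ᶠ s : ℝ in 𝓝 0,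
      z + s • h ∈ mmPs l c τ ∧ mmM (z + s • h) = mmM z + s * κ := by
  filter_upwards [mm_near hl c τ zb hzb] with z hz hzP
  have e1 : ∀ᶠ s : ℝ in 𝓝 0, ∀ i : Fin l, mmM zb ≠ zb (Sum.inl i) →
      z (Sum.inl i) + s * h (Sum.inl i) < mmM z + s * κ := by
    rw [Filter.eventually_all]
    intro i
    by_cases hi : mmM zb = zb (Sum.inl i)
    · exact Filter.Eventually.of_forall fun z hz => absurd hi hz
    · filter_upwards [lin_ev (hz.1 i hi) (h (Sum.inl i)) κ] with s hs _
      exact hs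
  have e2 : ∀ᶠ s : ℝ in 𝓝 0, ∀ t, mmG l c t zb ≠ τ t →
      mmG l c t z + s * mmG l c t h < τ t + s * 0 := by
    rw [Filter.eventually_all]
    intro t
    by_cases ht : mmG l c t zb = τ t
    · exact Filter.Eventually.of_forall fun z hz => absurd ht hz
    · filter_upwards [lin_ev (hz.2 t ht) (mmG l c t h) 0] with s hs _
      exact hs
  filter_upwards [e1, e2] with s h1 h2
  refine ⟨fun t => ?_, le_antisymm (mmM_le hl _ fun i => ?_) ?_⟩
  · rw [mmG_add]
    by_cases ht : mmG l c t zb = τ t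
    · rw [hI t ht, mul_zero, add_zero]
      exact hzP t
    · have := h2 t ht
      linarith
  · simp only [PiLp.add_apply, PiLp.smul_apply, smul_eq_mul]
    by_cases hi : mmM zb = zb (Sum.inl i)
    · rw [hK i hi]
      have := le_mmM z i
      linarith
    · exact (h1 i hi).le
  · obtain ⟨i, hi⟩ := exists_mmM hl z
    have hiK : mmM zb = zb (Sum.inl i) := by
      by_contra hcon
      exact (hz.1 i hcon).ne hi
    have := le_mmM (z + s • h) i
    simp only [PiLp.add_apply, PiLp.smul_apply, smul_eq_mul, hK i hiK, hi] at this
    exact this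

def mmP1 (l r : ℕ) : EuclideanSpace ℝ (Fin l ⊕ Fin r) →L[ℝ] Euc l :=
  LinearMap.toContinuousLinearMap
  { toFun := fun z => WithLp.toLp 2 fun i => z (Sum.inl i)
    map_add' := fun _ _ => rfl
    map_smul' := fun _ _ => rfl }

def mmP2 (l r : ℕ) : EuclideanSpace ℝ (Fin l ⊕ Fin r) →L[ℝ] Euc r :=
  LinearMap.toContinuousLinearMap
  { toFun := fun z => WithLp.toLp 2 fun i => z (Sum.inr i)
    map_add' := fun _ _ => rfl
    map_smul' := fun _ _ => rfl }

def mmJ (l r : ℕ) : Euc l × Euc r →ₗ[ℝ] EuclideanSpace ℝ (Fin l ⊕ Fin r) where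
  toFun y := WithLp.toLp 2 (Sum.elim y.1 y.2)
  map_add' x y := by ext i; rcases i with i | i <;> rfl
  map_smul' a y := by ext i; rcases i with i | i <;> rfl

lemma mmJ_P {l r : ℕ} (z : EuclideanSpace ℝ (Fin l ⊕ Fin r)) :
    mmJ l r (mmP1 l r z, mmP2 l r z) = z := by
  ext i; rcases i with i | i <;> rfl

lemma mmP1_J {l r : ℕ} (y : Euc l × Euc r) : mmP1 l r (mmJ l r y) = y.1 := rfl
lemma mmP2_J {l r : ℕ} (y : Euc l × Euc r) : mmP2 l r (mmJ l r y) = y.2 := rfl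

lemma inner_split {l r : ℕ} (z z' : EuclideanSpace ℝ (Fin l ⊕ Fin r)) :
    ⟪z, z'⟫ = ⟪mmP1 l r z, mmP1 l r z'⟫ + ⟪mmP2 l r z, mmP2 l r z'⟫ := by
  simp only [PiLp.inner_apply, Fintype.sum_sum_type]
  rfl

lemma mmG_eq {l r p : ℕ} (c : Fin p → Euc r) (t : Fin p)
    (z : EuclideanSpace ℝ (Fin l ⊕ Fin r)) : mmG l c t z = ⟪c t, mmP2 l r z⟫ := by
  simp only [PiLp.inner_apply, mmG]
  refine Finset.sum_congr rfl fun j _ => ?_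
  change _ = z (Sum.inr j) * c t j
  ring

/-- the subspace 𝒟 -/
def mmD {l r p : ℕ} (c : Fin p → Euc r) (K : Set (Fin l)) (I : Set (Fin p)) :
    Submodule ℝ (EuclideanSpace ℝ (Fin l ⊕ Fin r)) :=
  (Submodule.span ℝ (Set.image2
    (fun i j => (EuclideanSpace.single i (1:ℝ) : Euc l) - EuclideanSpace.single j (1:ℝ)) K K)).comap
      (mmP1 l r).toLinearMap ⊓ (Submodule.span ℝ (c '' I)).comap (mmP2 l r).toLinearMap

lemma mm_main {l r p : ℕ} (hl : 0 < l) (c : Fin p → Euc r) (τ : Fin p → ℝ)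
    (zb vb : EuclideanSpace ℝ (Fin l ⊕ Fin r)) (hzb : ∀ t, mmG l c t zb ≤ τ t)
    (hvb : vb ∈ subdiff (mmTheta l c τ) zb) :
    Spar (mmTheta l c τ) zb = mmD c {i | mmM zb = zb (Sum.inl i)} {t | mmG l c t zb = τ t} ∧
    sosd (mmTheta l c τ) zb vb 0 =
      mmD c {i | mmM zb = zb (Sum.inl i)} {t | mmG l c t zb = τ t} := by
  set K := {i : Fin l | mmM zb = zb (Sum.inl i)} with hK
  set I := {t | mmG l c t zb = τ t} with hI
  have hθ : ∀ z, mmTheta l c τ z =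
      if z ∈ mmPs l c τ then (mmM z : EReal) else ⊤ := by
    intro z
    by_cases hz : z ∈ mmPs l c τ
    · rw [if_pos hz]
      exact if_pos hz
    · rw [if_neg hz]
      exact if_neg hz
  have hzb' : zb ∈ mmPs l c τ := hzb
  obtain ⟨i0, hi0⟩ := exists_mmM hl zb
  refine abstract_sosd hθ hzb' hvb _ (mm_H1 hl c τ zb hzb) ?_ ?_
  · intro h hh
    rw [Submodule.mem_orthogonal] at hh
    refine ⟨h (Sum.inl i0), mm_H2 hl c τ zb hzb h _ ?_ ?_⟩
    · intro i hi
      have := hh (mmJ l r (EuclideanSpace.single i (1:ℝ) - EuclideanSpace.single i0 (1:ℝ), 0))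
        ⟨Submodule.subset_span ⟨i, hi, i0, hi0.symm, rfl⟩, (Submodule.zero_mem _ : (0 : Euc r) ∈ Submodule.span ℝ (c '' I))⟩
      rw [inner_split, mmP1_J, mmP2_J, inner_zero_left, add_zero, inner_sub_left,
        EuclideanSpace.inner_single_left, EuclideanSpace.inner_single_left] at this
      simp only [map_one, one_mul] at this
      change h (Sum.inl i) - h (Sum.inl i0) = 0 at this
      linarith
    · intro t ht
      have := hh (mmJ l r (0, c t))
        ⟨(Submodule.zero_mem _ : (0 : Euc l) ∈ Submodule.span ℝ (Set.image2
          (fun i j => (EuclideanSpace.single i (1:ℝ) : Euc l) - EuclideanSpace.single j (1:ℝ))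
          K K)), Submodule.subset_span ⟨t, ht, rfl⟩⟩
      rw [inner_split, mmP1_J, mmP2_J, inner_zero_left, zero_add] at this
      rw [mmG_eq]
      exact this
  · skip
    have hmem := mem_subdiff_aux hθ hzb' zb
    have hg : ∀ i ∈ K, ∀ y2 : Euc r, (∀ z', (∀ t, mmG l c t z' ≤ τ t) →
        ⟪y2, mmP2 l r (z' - zb)⟫ ≤ 0) →
        mmJ l r (EuclideanSpace.single i (1:ℝ), y2) ∈ subdiff (mmTheta l c τ) zb := by
      intro i hi y2 hy
      rw [hmem]
      refine ⟨hzb, fun z' hz' => ?_⟩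
      have h1 := hy z' hz'
      rw [inner_split, mmP1_J, mmP2_J, EuclideanSpace.inner_single_left]
      simp only [map_one, one_mul]
      have h2 : mmP1 l r (z' - zb) i = z' (Sum.inl i) - zb (Sum.inl i) := rfl
      have h3 : mmM zb = zb (Sum.inl i) := hi
      have h4 := le_mmM z' i
      simp only [] at h1 h2 ⊢
      linarith
    have hg0 : ∀ i ∈ K, mmJ l r (EuclideanSpace.single i (1:ℝ), 0) ∈
        subdiff (mmTheta l c τ) zb := fun i hi => hg i hi 0 fun z' _ => by simp
    have hsub : ∀ v ∈ subdiff (mmTheta l c τ) zb, ∀ v' ∈ subdiff (mmTheta l c τ) zb,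
        v - v' ∈ Spar (mmTheta l c τ) zb := by
      intro v hv v' hv'
      unfold Spar
      rw [direction_affineSpan]
      exact vsub_mem_vectorSpan ℝ hv hv'
    have k1 : Submodule.span ℝ (Set.image2
        (fun i j => (EuclideanSpace.single i (1:ℝ) : Euc l) - EuclideanSpace.single j (1:ℝ)) K K) ≤
        (Spar (mmTheta l c τ) zb).comap (mmJ l r ∘ₗ LinearMap.inl ℝ _ _) := by
      rw [Submodule.span_le]
      rintro _ ⟨i, hi, j, hj, rfl⟩
      have := hsub _ (hg0 i hi) _ (hg0 j hj)
      rw [← map_sub, Prod.mk_sub_mk, sub_zero] at this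
      exact this
    have k2 : Submodule.span ℝ (c '' I) ≤
        (Spar (mmTheta l c τ) zb).comap (mmJ l r ∘ₗ LinearMap.inr ℝ _ _) := by
      rw [Submodule.span_le]
      rintro _ ⟨t, ht, rfl⟩
      have h1 := hg i0 hi0.symm (c t) (fun z' hz' => by
        have a1 := hz' t
        have a2 : mmG l c t zb = τ t := ht
        rw [mmG_eq] at a1 a2
        rw [map_sub, inner_sub_right]
        linarith)
      have := hsub _ h1 _ (hg0 i0 hi0.symm)
      rw [← map_sub, Prod.mk_sub_mk, sub_zero, sub_self] at this
      exact this
    rintro y ⟨hy1, hy2⟩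
    have a1 := k1 hy1
    have a2 := k2 hy2
    have := Submodule.add_mem (Spar (mmTheta l c τ) zb) a1 a2
    rw [← mmJ_P y]
    have e : ((mmP1 l r y, mmP2 l r y) : Euc l × Euc r) =
      (mmP1 l r y, 0) + (0, mmP2 l r y) := by simp
    rw [e, map_add]
    exact this

lemma mm_fin {l r p n : ℕ} (c : Fin p → Euc r) (K : Set (Fin l)) (I : Set (Fin p))
    (A : Euc n →L[ℝ] EuclideanSpace ℝ (Fin l ⊕ Fin r)) (A1 : Euc n →L[ℝ] Euc l)
    (A2 : Euc n →L[ℝ] Euc r) (h1 : A1 = mmP1 l r ∘L A) (h2 : A2 = mmP2 l r ∘L A) :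
    ((mmD c K I : Set _) ∩ {y | ContinuousLinearMap.adjoint A y = 0} = {0} ↔
      ∀ (y₁ : Euc l) (y₂ : Euc r),
        y₁ ∈ Submodule.span ℝ (Set.image2
            (fun i j => (EuclideanSpace.single i (1:ℝ) : Euc l) - EuclideanSpace.single j (1:ℝ))
            K K) →
        y₂ ∈ Submodule.span ℝ (c '' I) →
        ContinuousLinearMap.adjoint A1 y₁ + ContinuousLinearMap.adjoint A2 y₂ = 0 →
        y₁ = 0 ∧ y₂ = 0) := by
  have hadj : ∀ y, ContinuousLinearMap.adjoint A y =
      ContinuousLinearMap.adjoint A1 (mmP1 l r y) + ContinuousLinearMap.adjoint A2 (mmP2 l r y) := by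
    intro y
    refine ext_inner_left ℝ fun x => ?_
    rw [inner_add_right, ContinuousLinearMap.adjoint_inner_right,
      ContinuousLinearMap.adjoint_inner_right, ContinuousLinearMap.adjoint_inner_right,
      inner_split, h1, h2]
    rfl
  constructor
  · intro H y1 y2 hy1 hy2 hy
    have : mmJ l r (y1, y2) ∈ ((mmD c K I : Set _) ∩ {y | ContinuousLinearMap.adjoint A y = 0}) :=
      ⟨⟨hy1, hy2⟩, by rw [Set.mem_ofPred_eq, hadj]; exact hy⟩
    rw [H, Set.mem_singleton_iff] at this
    constructor
    · have := congrArg (mmP1 l r) this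
      rwa [mmP1_J, map_zero] at this
    · have := congrArg (mmP2 l r) this
      rwa [mmP2_J, map_zero] at this
  · intro H
    apply Set.Subset.antisymm
    · rintro y ⟨⟨hy1, hy2⟩, hy⟩
      rw [Set.mem_ofPred_eq, hadj] at hy
      obtain ⟨e1, e2⟩ := H (mmP1 l r y) (mmP2 l r y) hy1 hy2 hy
      rw [Set.mem_singleton_iff, ← mmJ_P y, e1, e2]
      exact map_zero (mmJ l r)
    · rintro _ rfl
      exact ⟨Submodule.zero_mem _, map_zero _⟩

/-- Equivalent form of the nondegeneracy condition for constrained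
minimax problems: `∂²θ(zb,vb)(0) ∩ ker ∇ₓΦ(xb,wb)* = {0}` (equivalently,
`S(zb) ∩ ker ∇ₓΦ(xb,wb)* = {0}`) holds iff the only pair `(y₁,y₂)` with
`y₁ ∈ span{e_i - e_j : i,j ∈ 𝒦(zb₁)}`, `y₂ ∈ span{c_t : t ∈ ℐ(zb₂)}` and
`∇ₓΞ(xb,wb)* y₁ + ∇ₓΥ(xb,wb)* y₂ = 0` is `(0,0)`. -/
theorem minimax_nondegeneracy_iff {n dd l r p : ℕ} (hl : 0 < l)
    (φs : Fin l → Euc n × Euc dd → ℝ) (ζs : Fin r → Euc n × Euc dd → ℝ)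
    (c : Fin p → Euc r) (τ : Fin p → ℝ) (xb : Euc n) (wb : Euc dd)
    (hφs : ∀ i, ContDiffAt ℝ 2 (φs i) (xb, wb)) (hζs : ∀ j, ContDiffAt ℝ 2 (ζs j) (xb, wb))
    (hfeas : ∀ t, ⟪c t, mmUps ζs (xb, wb)⟫ ≤ τ t)
    (vb : EuclideanSpace ℝ (Fin l ⊕ Fin r))
    (hvb : vb ∈ subdiff (mmTheta l c τ) (mmPhi φs ζs (xb, wb))) :
    ((sosd (mmTheta l c τ) (mmPhi φs ζs (xb, wb)) vb 0 ∩
        {y | ContinuousLinearMap.adjoint (fderiv ℝ (fun x => mmPhi φs ζs (x, wb)) xb) y = 0} =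
          {0} ↔
      ∀ (y₁ : Euc l) (y₂ : Euc r),
        y₁ ∈ Submodule.span ℝ (Set.image2
            (fun i j => (EuclideanSpace.single i (1:ℝ) : Euc l) - EuclideanSpace.single j (1:ℝ))
            {i | (⨆ i', φs i' (xb, wb)) = φs i (xb, wb)}
            {i | (⨆ i', φs i' (xb, wb)) = φs i (xb, wb)}) →
        y₂ ∈ Submodule.span ℝ (c '' {t | ⟪c t, mmUps ζs (xb, wb)⟫ = τ t}) →
        ContinuousLinearMap.adjoint (fderiv ℝ (fun x => mmXi φs (x, wb)) xb) y₁ +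
          ContinuousLinearMap.adjoint (fderiv ℝ (fun x => mmUps ζs (x, wb)) xb) y₂ = 0 →
        y₁ = 0 ∧ y₂ = 0) ∧
     ((Spar (mmTheta l c τ) (mmPhi φs ζs (xb, wb)) : Set (EuclideanSpace ℝ (Fin l ⊕ Fin r))) ∩
        {y | ContinuousLinearMap.adjoint (fderiv ℝ (fun x => mmPhi φs ζs (x, wb)) xb) y = 0} =
          {0} ↔
      ∀ (y₁ : Euc l) (y₂ : Euc r),
        y₁ ∈ Submodule.span ℝ (Set.image2
            (fun i j => (EuclideanSpace.single i (1:ℝ) : Euc l) - EuclideanSpace.single j (1:ℝ))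
            {i | (⨆ i', φs i' (xb, wb)) = φs i (xb, wb)}
            {i | (⨆ i', φs i' (xb, wb)) = φs i (xb, wb)}) →
        y₂ ∈ Submodule.span ℝ (c '' {t | ⟪c t, mmUps ζs (xb, wb)⟫ = τ t}) →
        ContinuousLinearMap.adjoint (fderiv ℝ (fun x => mmXi φs (x, wb)) xb) y₁ +
          ContinuousLinearMap.adjoint (fderiv ℝ (fun x => mmUps ζs (x, wb)) xb) y₂ = 0 →
        y₁ = 0 ∧ y₂ = 0)) := by
  have hd : DifferentiableAt ℝ (fun x => mmPhi φs ζs (x, wb)) xb := by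
    rw [differentiableAt_euclidean]
    have hp : DifferentiableAt ℝ (fun x : Euc n => (x, wb)) xb := by fun_prop
    rintro (i | j)
    · exact DifferentiableAt.comp xb ((hφs i).differentiableAt (by norm_num)) hp
    · exact DifferentiableAt.comp xb ((hζs j).differentiableAt (by norm_num)) hp
  have h1 : fderiv ℝ (fun x => mmXi φs (x, wb)) xb =
      mmP1 l r ∘L fderiv ℝ (fun x => mmPhi φs ζs (x, wb)) xb :=
    ((mmP1 l r).hasFDerivAt.comp xb hd.hasFDerivAt).fderiv
  have h2 : fderiv ℝ (fun x => mmUps ζs (x, wb)) xb =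
      mmP2 l r ∘L fderiv ℝ (fun x => mmPhi φs ζs (x, wb)) xb :=
    ((mmP2 l r).hasFDerivAt.comp xb hd.hasFDerivAt).fderiv
  have hG : ∀ t, mmG l c t (mmPhi φs ζs (xb, wb)) = ⟪c t, mmUps ζs (xb, wb)⟫ :=
    fun t => mmG_eq c t _
  obtain ⟨hS, hs⟩ := mm_main hl c τ (mmPhi φs ζs (xb, wb)) vb
    (fun t => by rw [hG]; exact hfeas t) hvb
  simp only [hG] at hS hs
  rw [hS, hs]
  have := mm_fin c {i | (⨆ i', φs i' (xb, wb)) = φs i (xb, wb)}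
    {t | ⟪c t, mmUps ζs (xb, wb)⟫ = τ t} _ _ _ h1 h2
  exact ⟨this, this⟩
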